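/- Uniqueness of the decomposition of a Fermat real: let k, m ∈ ℕ, r, s ∈ ℝ, α : Fin k → ℝ, a : Fin k → ℝ, β : Fin m → ℝ, b : Fin m → ℝ, and assume 0 < a i ≤ 1 and α i ≠ 0 for all i with a strictly increasing, and 0 < b j ≤ 1 and β j ≠ 0 for all j with b strictly increasing. If (r + Σ_{i} α i · n^{−a i}) − (s + Σ_{j} β j · n^{−b j}) = o(1/n) as n → ∞, then r = s, k = m, and a i = b i and α i = β i for all i. -/

import Mathlib

/-!
The functions `n ↦ n ^ (-e)` for distinct exponents `e ≤ 1` are linearly independent modulo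
`o(1/n)`: the term with the smallest exponent dominates all the others as well as `1/n`, so its
coefficient vanishes, and it can be removed (`coeff_eq_zero_of_isLittleO`).

Each decomposition is a finite family of terms `αᵢ n ^ (-aᵢ)`, together with the constant `r` as the
term of exponent `0`. Collecting terms by exponent (`coeffAt`), the two families have the same
coefficient at every exponent. Exponent `0` gives `r = s`. As the `aᵢ` are distinct and the `αᵢ`
nonzero, the set of exponents with nonzero coefficient is the range of `a`, and likewise for `b`;
so the ranges agree, and strictly increasing enumerations of the same finite set coincide.
-/

open Filter Asymptotics

lemma rpow_neg_isLittleO {x y : ℝ} (hxy : x < y) :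
    (fun n : ℕ => (n : ℝ) ^ (-y)) =o[atTop] (fun n : ℕ => (n : ℝ) ^ (-x)) := by
  have hpos : ∀ᶠ n : ℕ in atTop, 0 < (n : ℝ) := by
    filter_upwards [eventually_gt_atTop 0] with n hn using by exact_mod_cast hn
  refine (isLittleO_iff_tendsto' ?_).2 ?_
  · filter_upwards [hpos] with n hn h0
    exact absurd h0 (by positivity)
  · refine ((tendsto_rpow_neg_atTop (sub_pos.2 hxy)).comp
      tendsto_natCast_atTop_atTop).congr' ?_
    filter_upwards [hpos] with n hn
    rw [← Real.rpow_sub hn, Function.comp_apply]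
    congr 1
    ring

lemma coeff_eq_zero_of_isLittleO (c : ℝ → ℝ) (S : Finset ℝ) (hS : ∀ e ∈ S, e ≤ 1)
    (h : (fun n : ℕ => ∑ e ∈ S, c e * (n : ℝ) ^ (-e)) =o[atTop] (fun n : ℕ => 1 / (n : ℝ))) :
    ∀ e ∈ S, c e = 0 := by
  induction S using Finset.induction_on_min with
  | empty => simp
  | insert x S hx ih =>
    have hxS : x ∉ S := fun hmem => lt_irrefl _ (hx x hmem)
    simp only [Finset.sum_insert hxS] at h
    have hrest : (fun n : ℕ => ∑ e ∈ S, c e * (n : ℝ) ^ (-e)) =o[atTop]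
        (fun n : ℕ => (n : ℝ) ^ (-x)) :=
      IsLittleO.fun_sum fun e he => (rpow_neg_isLittleO (hx e he)).const_mul_left _
    have hone : (fun n : ℕ => 1 / (n : ℝ)) =O[atTop] (fun n : ℕ => (n : ℝ) ^ (-x)) := by
      have hx1 : x ≤ 1 := hS x (Finset.mem_insert_self _ _)
      refine IsBigO.of_bound 1 ?_
      filter_upwards [eventually_ge_atTop 1] with n hn
      have hn' : (1 : ℝ) ≤ n := by exact_mod_cast hn
      rw [one_div, ← Real.rpow_neg_one, one_mul, Real.norm_of_nonneg (by positivity),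
        Real.norm_of_nonneg (by positivity)]
      exact Real.rpow_le_rpow_of_exponent_le hn' (by linarith)
    have hlead : (fun n : ℕ => c x * (n : ℝ) ^ (-x)) =o[atTop]
        (fun n : ℕ => (n : ℝ) ^ (-x)) := by
      simpa using (h.trans_isBigO hone).sub hrest
    have hcx : c x = 0 := by
      by_contra hne
      have hself := (isLittleO_const_mul_left_iff hne).1 hlead
      obtain ⟨n, hn, hn0⟩ := ((hself.def (c := 1 / 2) (by norm_num)).and (eventually_gt_atTop 0)).exists
      have hpos : 0 < ‖(n : ℝ) ^ (-x)‖ := norm_pos_iff.2 (by positivity)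
      linarith
    simp only [hcx, zero_mul, zero_add] at h
    intro e he
    rcases Finset.mem_insert.1 he with rfl | he
    · exact hcx
    · exact ih (fun e he => hS e (Finset.mem_insert_of_mem he)) h e he

/-- The total coefficient of `n ^ (-x)` in `∑ i, α i * n ^ (-(a i))`. -/
noncomputable def coeffAt {k : ℕ} (α a : Fin k → ℝ) (x : ℝ) : ℝ :=
  ∑ i, if a i = x then α i else 0

lemma sum_coeffAt {k : ℕ} (α a : Fin k → ℝ) (S : Finset ℝ) (hS : ∀ i, a i ∈ S) (t : ℝ) :
    ∑ e ∈ S, coeffAt α a e * t ^ (-e) = ∑ i, α i * t ^ (-(a i)) := by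
  simp only [coeffAt, Finset.sum_mul, ite_mul, zero_mul]
  rw [Finset.sum_comm]
  refine Finset.sum_congr rfl fun i _ => ?_
  rw [Finset.sum_ite_eq, if_pos (hS i)]

lemma coeffAt_apply {k : ℕ} (α : Fin k → ℝ) {a : Fin k → ℝ} (ha : Function.Injective a)
    (i : Fin k) : coeffAt α a (a i) = α i := by
  simp [coeffAt, ha.eq_iff]

lemma coeffAt_eq_zero {k : ℕ} (α : Fin k → ℝ) {a : Fin k → ℝ} {x : ℝ} (hx : ∀ i, a i ≠ x) :
    coeffAt α a x = 0 := by
  simp [coeffAt, hx]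

lemma range_subset_of_coeffAt_eq {k m : ℕ} {α a : Fin k → ℝ} {β b : Fin m → ℝ}
    (hα : ∀ i, α i ≠ 0) (ha : Function.Injective a)
    (h : ∀ i, coeffAt α a (a i) = coeffAt β b (a i)) :
    Set.range a ⊆ Set.range b := by
  rintro _ ⟨i, rfl⟩
  by_contra hne
  refine hα i ?_
  rw [← coeffAt_apply α ha, h, coeffAt_eq_zero]
  exact fun j hj => hne ⟨j, hj⟩

/-- Uniqueness of the decomposition of a Fermat real: if two decompositions
`r + ∑ αᵢ n^(-aᵢ)` and `s + ∑ βⱼ n^(-bⱼ)` (with nonzero coefficients and strictly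
increasing exponents in `(0, 1]`) differ by `o(1/n)`, then they coincide. -/
theorem fermatReal_decomposition_unique (k m : ℕ) (r s : ℝ)
    (α a : Fin k → ℝ) (β b : Fin m → ℝ)
    (ha : ∀ i, 0 < a i ∧ a i ≤ 1) (hα : ∀ i, α i ≠ 0) (hamono : StrictMono a)
    (hb : ∀ j, 0 < b j ∧ b j ≤ 1) (hβ : ∀ j, β j ≠ 0) (hbmono : StrictMono b)
    (h : (fun n : ℕ => (r + ∑ i, α i * (n : ℝ) ^ (-(a i))) -
        (s + ∑ j, β j * (n : ℝ) ^ (-(b j)))) =o[atTop] (fun n : ℕ => 1 / (n : ℝ))) :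
    r = s ∧ k = m ∧
      ∀ (i : Fin k) (j : Fin m), (i : ℕ) = (j : ℕ) → a i = b j ∧ α i = β j := by
  -- The constants `r`, `s` enter as the terms of exponent `0`.
  let c : ℝ → ℝ := fun x =>
    ((if x = 0 then r else 0) + coeffAt α a x) - ((if x = 0 then s else 0) + coeffAt β b x)
  let S : Finset ℝ := insert 0 (Finset.univ.image a ∪ Finset.univ.image b)
  have haS : ∀ i, a i ∈ S := fun i => by simp [S]
  have hbS : ∀ j, b j ∈ S := fun j => by simp [S]
  have h0S : (0 : ℝ) ∈ S := by simp [S]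
  have hS : ∀ e ∈ S, e ≤ 1 := by
    intro e he
    simp only [S, Finset.mem_insert, Finset.mem_union, Finset.mem_image, Finset.mem_univ,
      true_and] at he
    rcases he with rfl | ⟨i, rfl⟩ | ⟨j, rfl⟩
    · exact zero_le_one
    · exact (ha i).2
    · exact (hb j).2
  have hc : ∀ e ∈ S, c e = 0 := by
    refine coeff_eq_zero_of_isLittleO c S hS (h.congr_left fun n => ?_)
    simp only [c, sub_mul, add_mul, Finset.sum_sub_distrib, Finset.sum_add_distrib,
      sum_coeffAt α a S haS, sum_coeffAt β b S hbS, ite_mul, zero_mul, Finset.sum_ite_eq',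
      if_pos h0S, neg_zero, Real.rpow_zero, mul_one]
  have hrs : r = s := by
    have := hc 0 h0S
    simp only [c, if_true, coeffAt_eq_zero α fun i => (ha i).1.ne',
      coeffAt_eq_zero β fun j => (hb j).1.ne'] at this
    linarith
  have hcoeff : ∀ e ∈ S, coeffAt α a e = coeffAt β b e := by
    intro e he
    have := hc e he
    simp only [c, hrs] at this
    linarith
  have hrange : Set.range a = Set.range b :=
    (range_subset_of_coeffAt_eq hα hamono.injective fun i => hcoeff _ (haS i)).antisymm
      (range_subset_of_coeffAt_eq hβ hbmono.injective fun j => (hcoeff _ (hbS j)).symm)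
  have hkm : k = m := by
    have := congrArg Set.ncard hrange
    simpa [Set.ncard_range_of_injective hamono.injective,
      Set.ncard_range_of_injective hbmono.injective] using this
  subst hkm
  obtain rfl : a = b := (hamono.range_inj hbmono).1 hrange
  refine ⟨hrs, rfl, fun i j hij => ?_⟩
  obtain rfl : i = j := Fin.ext hij
  refine ⟨rfl, ?_⟩
  rw [← coeffAt_apply α hamono.injective, ← coeffAt_apply β hamono.injective]
  exact hcoeff _ (haS i)
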